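/- For every stable matching process SM (i.e., for every choice of tie-breaking rule in the greedy step), every online algorithm ALG, and all nonnegative round weights w_1, …, w_T, the expected reward of SM is at least 0.316 times the expected reward of ALG. -/

import Mathlib

open Finset

/-- A finite simple graph presented via an abstract edge type: each edge has a
set of exactly two endpoints, and distinct edges have distinct endpoint sets. -/
structure GraphEdges (V E : Type) where
  ends : E → Finset V
  card_ends : ∀ e, (ends e).card = 2
  ends_injective : Function.Injective ends

variable {V E : Type}

/-- A matching: a set of pairwise endpoint-disjoint edges. -/
def GraphEdges.IsMatching (G : GraphEdges V E) (M : Finset E) : Prop :=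
  ∀ e ∈ M, ∀ f ∈ M, e ≠ f → Disjoint (G.ends e) (G.ends f)

/-- `select` is an online algorithm: under each realization `ω` it selects a
matching in every round, and its round-`t` selection depends only on its own
selections in earlier rounds and on the realized values of the edges it
selected in those rounds. -/
def GraphEdges.IsOnline (G : GraphEdges V E) (select : (E → Bool) → ℕ → Finset E) : Prop :=
  (∀ ω t, G.IsMatching (select ω t)) ∧
  (∀ ω ω' t, (∀ s, s < t → ∀ e ∈ select ω s, ω' e = ω e) → select ω' t = select ω t)

/-- Probability of the sample graph `ω` under independent Bernoulli edges. -/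
def probOf [Fintype E] (p : E → ℝ) (ω : E → Bool) : ℝ :=
  ∏ e : E, if ω e then p e else 1 - p e

/-- Expected reward of an algorithm: the `w`-weighted expected number of
successful selected edges over rounds `0, …, T-1`. -/
noncomputable def expectedReward [Fintype E] [DecidableEq E] (p : E → ℝ) (w : ℕ → ℝ)
    (T : ℕ) (select : (E → Bool) → ℕ → Finset E) : ℝ :=
  ∑ ω : E → Bool, probOf p ω *
    ∑ t ∈ Finset.range T, w t * ((select ω t).filter (fun e => ω e)).card

/-- Edges selected by `select` in rounds before `t` under realization `ω`. -/
def selectedBefore [DecidableEq E] (select : (E → Bool) → ℕ → Finset E)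
    (ω : E → Bool) (t : ℕ) : Finset E :=
  (Finset.range t).biUnion (select ω)

/-- An edge `f` is available for the greedy step, given the dead (previously
selected and revealed unsuccessful) edges `D` and the current partial matching
`M`: it is not dead, and shares no endpoint with any edge of `M`. -/
def GraphEdges.Avail (G : GraphEdges V E) (D M : Finset E) (f : E) : Prop :=
  f ∉ D ∧ ∀ e ∈ M, Disjoint (G.ends f) (G.ends e)

/-- `L` records, in order, the edges added by a run of the greedy procedure
extending the committed matching `A`, avoiding dead edges `D`: each added edge
is available (w.r.t. the matching built so far) of maximum probability, and at
the end no available edge remains. -/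
def GraphEdges.IsGreedyRun [DecidableEq E] (G : GraphEdges V E) (p : E → ℝ)
    (D A : Finset E) (L : List E) : Prop :=
  (∀ i : Fin L.length,
      G.Avail D (A ∪ (L.take i).toFinset) (L.get i) ∧
      ∀ f, G.Avail D (A ∪ (L.take i).toFinset) f → p f ≤ p (L.get i)) ∧
  (∀ f, ¬ G.Avail D (A ∪ L.toFinset) f)

/-- `select` is a stable matching process: an online algorithm which in each
round keeps all previously selected successful edges and augments them with a
greedily built matching (ties broken arbitrarily). -/
def GraphEdges.IsSM [DecidableEq E] (G : GraphEdges V E) (p : E → ℝ)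
    (select : (E → Bool) → ℕ → Finset E) : Prop :=
  G.IsOnline select ∧
  ∀ ω t,
    ∃ L : List E,
      G.IsGreedyRun p
        ((selectedBefore select ω t).filter (fun e => ¬ ω e))
        ((selectedBefore select ω t).filter (fun e => ω e)) L ∧
      select ω t = (selectedBefore select ω t).filter (fun e => ω e) ∪ L.toFinset

/-- Flip one coordinate. -/
def flipAt [DecidableEq E] (e : E) (ω : E → Bool) : E → Bool :=
  Function.update ω e (!ω e)

theorem flipAt_flipAt [DecidableEq E] (e : E) (ω : E → Bool) : flipAt e (flipAt e ω) = ω := by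
  simp [flipAt]

theorem flipAt_self [DecidableEq E] (e : E) (ω : E → Bool) : flipAt e ω e = !ω e := by
  simp [flipAt]

theorem flipAt_ne [DecidableEq E] {e x : E} (ω : E → Bool) (h : x ≠ e) : flipAt e ω x = ω x := by
  simp [flipAt, h]

theorem probOf_nonneg [Fintype E] (p : E → ℝ) (hp : ∀ e, 0 ≤ p e ∧ p e ≤ 1) (ω : E → Bool) :
    0 ≤ probOf p ω := by
  unfold probOf
  refine Finset.prod_nonneg fun e _ => ?_
  have := hp e
  split_ifs <;> linarith

/-- Independence of coordinate `e` from functions that do not depend on it. -/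
theorem indep_coord [Fintype E] [DecidableEq E] (p : E → ℝ) (e : E) (f : (E → Bool) → ℝ)
    (hf : ∀ ω, f (flipAt e ω) = f ω) :
    ∑ ω : E → Bool, probOf p ω * (if ω e then f ω else 0) =
      ∑ ω : E → Bool, probOf p ω * (p e * f ω) := by
  rw [← sub_eq_zero, ← Finset.sum_sub_distrib]
  set h : (E → Bool) → ℝ := fun ω =>
    probOf p ω * (if ω e then f ω else 0) - probOf p ω * (p e * f ω) with hh
  have hflip : ∀ ω, h (flipAt e ω) = - h ω := by
    intro ω
    have hP : ∀ ω' : E → Bool, probOf p ω' = (if ω' e then p e else 1 - p e) *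
        ∏ x ∈ Finset.univ.erase e, (if ω' x then p x else 1 - p x) := by
      intro ω'
      unfold probOf
      rw [Finset.mul_prod_erase Finset.univ (fun x => if ω' x then p x else 1 - p x)
        (Finset.mem_univ e)]
    have hR : ∏ x ∈ Finset.univ.erase e, (if flipAt e ω x then p x else 1 - p x) =
        ∏ x ∈ Finset.univ.erase e, (if ω x then p x else 1 - p x) := by
      refine Finset.prod_congr rfl fun x hx => ?_
      rw [flipAt_ne ω (Finset.ne_of_mem_erase hx)]
    simp only [hh]
    rw [hP (flipAt e ω), hP ω, hR, hf, flipAt_self]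
    cases ω e <;> simp <;> ring
  have hs : ∑ ω, h ω = ∑ ω, h (flipAt e ω) :=
    (Equiv.sum_comp (⟨flipAt e, flipAt e, flipAt_flipAt e, flipAt_flipAt e⟩ :
      (E → Bool) ≃ (E → Bool)) h).symm
  have h2 : ∑ ω, h (flipAt e ω) = - ∑ ω, h ω := by
    rw [← Finset.sum_neg_distrib]
    exact Finset.sum_congr rfl fun ω _ => hflip ω
  change ∑ ω, h ω = 0
  linarith

/-- Set version: a random set in which membership of `e` does not depend on `ω e`. -/
theorem indep_set [Fintype E] [DecidableEq E] (p : E → ℝ) (N : (E → Bool) → Finset E)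
    (hN : ∀ ω e, e ∈ N ω → e ∈ N (flipAt e ω)) :
    ∑ ω : E → Bool, probOf p ω * (((N ω).filter (fun e => ω e)).card : ℝ) =
      ∑ ω : E → Bool, probOf p ω * ∑ e ∈ N ω, p e := by
  have key := fun e => indep_coord p e (fun ω => if e ∈ N ω then (1:ℝ) else 0) (by
    intro ω
    have : e ∈ N (flipAt e ω) ↔ e ∈ N ω :=
      ⟨fun h => by simpa [flipAt_flipAt] using hN _ _ h, hN ω e⟩
    simp [this])
  have h1 : ∀ ω, (((N ω).filter (fun e => ω e)).card : ℝ) =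
      ∑ e, (if ω e then (if e ∈ N ω then (1:ℝ) else 0) else 0) := by
    intro ω
    rw [Finset.card_filter]
    push_cast
    rw [← Finset.sum_filter_add_sum_filter_not Finset.univ (fun e => e ∈ N ω)]
    rw [Finset.sum_eq_zero (s := Finset.univ.filter (fun e => ¬ e ∈ N ω))]
    · rw [add_zero, Finset.filter_mem_eq_inter, Finset.univ_inter]
      exact Finset.sum_congr rfl fun e he => by simp [he]
    · intro e he
      simp at he
      simp [he]
  have h2 : ∀ ω, ∑ e ∈ N ω, p e = ∑ e, p e * (if e ∈ N ω then (1:ℝ) else 0) := by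
    intro ω
    simp
  simp_rw [h1, h2, Finset.mul_sum]
  rw [Finset.sum_comm, Finset.sum_comm (s := Finset.univ (α := E → Bool))]
  exact Finset.sum_congr rfl fun e _ => key e

theorem GraphEdges.card_touch_le [DecidableEq V] [DecidableEq E] (G : GraphEdges V E)
    (N : Finset E) (hN : G.IsMatching N) (f : E) :
    (N.filter (fun e => ¬ Disjoint (G.ends e) (G.ends f))).card ≤ 2 := by
  rw [← G.card_ends f]
  have hx : ∀ e, ∃ v, ¬ Disjoint (G.ends e) (G.ends f) → v ∈ G.ends e ∧ v ∈ G.ends f := by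
    intro e
    by_cases h : Disjoint (G.ends e) (G.ends f)
    · have : (G.ends f).Nonempty := by
        rw [← Finset.card_pos, G.card_ends]; norm_num
      exact ⟨this.choose, fun h' => absurd h h'⟩
    · obtain ⟨v, h1, h2⟩ := Finset.not_disjoint_iff.1 h
      exact ⟨v, fun _ => ⟨h1, h2⟩⟩
  choose g hg using hx
  refine Finset.card_le_card_of_injOn g ?_ ?_
  · intro e he
    simp only [Finset.coe_filter, Set.mem_ofPred_eq] at he
    exact (hg e he.2).2
  · intro e he e' he' hee
    simp only [Finset.coe_filter, Set.mem_ofPred_eq] at he he'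
    by_contra hne
    have := hN e he.1 e' he'.1 hne
    exact Finset.disjoint_left.1 this (hg e he.2).1 (hee ▸ (hg e' he'.2).1)

theorem GraphEdges.not_disjoint_self (G : GraphEdges V E) (e : E) :
    ¬ Disjoint (G.ends e) (G.ends e) := by
  intro h
  have := G.card_ends e
  rw [Finset.disjoint_self_iff_empty] at h
  simp [h] at this

/-- The greedy run is a 2-approximation. -/
theorem GraphEdges.greedy_bound [DecidableEq V] [DecidableEq E] (G : GraphEdges V E) (p : E → ℝ)
    (hp : ∀ e, 0 ≤ p e) (D A : Finset E) (L : List E) (hL : G.IsGreedyRun p D A L)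
    (N : Finset E) (hN : G.IsMatching N) (hav : ∀ e ∈ N, G.Avail D A e) :
    ∑ e ∈ N, p e ≤ 2 * ∑ f ∈ L.toFinset, p f := by
  have hblock : ∀ e ∈ N, ∃ f ∈ L.toFinset, ¬ Disjoint (G.ends e) (G.ends f) ∧ p e ≤ p f := by
    intro e he
    by_contra hcon
    push Not at hcon
    have hk : ∀ k, k ≤ L.length → G.Avail D (A ∪ (L.take k).toFinset) e := by
      intro k
      induction k with
      | zero => intro _; simpa using hav e he
      | succ k ih =>
        intro hk
        have h1 := ih (by omega)
        have h2 := (hL.1 ⟨k, by omega⟩).2 e h1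
        refine ⟨h1.1, fun x hx => ?_⟩
        rw [List.take_add_one, List.getElem?_eq_getElem (by omega : k < L.length)] at hx
        simp only [Option.toList_some, List.toFinset_append, Finset.mem_union,
          List.mem_toFinset, List.mem_singleton] at hx
        by_contra hd
        rcases hx with hx | hx | hx
        · exact hd (h1.2 x (by simp [hx]))
        · exact hd (h1.2 x (by simp [hx]))
        · have := hcon x (by simp [hx]) hd
          rw [hx] at this
          exact absurd h2 (not_le.2 this)
    have := hk L.length le_rfl
    rw [List.take_length] at this
    exact hL.2 e this
  calc ∑ e ∈ N, p e
      ≤ ∑ e ∈ N, ∑ f ∈ L.toFinset, (if ¬ Disjoint (G.ends e) (G.ends f) then p f else 0) := by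
        refine Finset.sum_le_sum fun e he => ?_
        obtain ⟨f, hf, h1, h2⟩ := hblock e he
        refine h2.trans ?_
        have := Finset.single_le_sum (s := L.toFinset)
          (f := fun f => if ¬ Disjoint (G.ends e) (G.ends f) then p f else 0)
          (fun x _ => by split_ifs <;> simp [hp]) hf
        simpa [h1] using this
    _ = ∑ f ∈ L.toFinset,
          ((N.filter (fun e => ¬ Disjoint (G.ends e) (G.ends f))).card : ℝ) * p f := by
        rw [Finset.sum_comm]
        refine Finset.sum_congr rfl fun f _ => ?_
        rw [← Finset.sum_filter, Finset.sum_const, nsmul_eq_mul]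
    _ ≤ ∑ f ∈ L.toFinset, 2 * p f := by
        refine Finset.sum_le_sum fun f _ => ?_
        refine mul_le_mul_of_nonneg_right ?_ (hp f)
        exact_mod_cast G.card_touch_le N hN f
    _ = _ := by rw [Finset.mul_sum]

/-- Edges newly selected in round `t`. -/
def newSel [DecidableEq E] (select : (E → Bool) → ℕ → Finset E) (ω : E → Bool) (t : ℕ) :
    Finset E := select ω t \ selectedBefore select ω t

theorem sel_flip [DecidableEq E] {G : GraphEdges V E} {select : (E → Bool) → ℕ → Finset E}
    (h : G.IsOnline select) (ω : E → Bool) (t : ℕ) (e : E) (he : e ∉ selectedBefore select ω t) :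
    ∀ s ≤ t, select (flipAt e ω) s = select ω s := by
  intro s hs
  refine h.2 ω (flipAt e ω) s fun r hr x hx => ?_
  refine flipAt_ne ω ?_
  rintro rfl
  exact he (Finset.mem_biUnion.2 ⟨r, Finset.mem_range.2 (by omega), hx⟩)

theorem selBefore_flip [DecidableEq E] {G : GraphEdges V E}
    {select : (E → Bool) → ℕ → Finset E}
    (h : G.IsOnline select) (ω : E → Bool) (t : ℕ) (e : E) (he : e ∉ selectedBefore select ω t) :
    selectedBefore select (flipAt e ω) t = selectedBefore select ω t := by
  unfold selectedBefore
  refine Finset.biUnion_congr rfl fun s hs => ?_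
  exact sel_flip h ω t e he s (Finset.mem_range.1 hs).le

theorem newSel_flip [DecidableEq E] {G : GraphEdges V E} {select : (E → Bool) → ℕ → Finset E}
    (h : G.IsOnline select) (ω : E → Bool) (t : ℕ) (e : E) (he : e ∈ newSel select ω t) :
    e ∈ newSel select (flipAt e ω) t := by
  have h2 := (Finset.mem_sdiff.1 he).2
  unfold newSel
  rw [selBefore_flip h ω t e h2, sel_flip h ω t e h2 t le_rfl]
  exact he

/-- Successful edges found before round `t`. -/
def succBefore [DecidableEq E] (select : (E → Bool) → ℕ → Finset E) (ω : E → Bool) (t : ℕ) :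
    Finset E := (selectedBefore select ω t).filter (fun e => ω e)

/-- Undetermined edges that avoid the committed matching. -/
noncomputable def remaining [Fintype E] [DecidableEq E] (G : GraphEdges V E)
    (select : (E → Bool) → ℕ → Finset E) (ω : E → Bool) (t : ℕ) : Finset E := by
  classical
  exact Finset.univ.filter (fun e => e ∉ selectedBefore select ω t ∧
    ∀ f ∈ succBefore select ω t, Disjoint (G.ends e) (G.ends f))

theorem mem_remaining [Fintype E] [DecidableEq E] (G : GraphEdges V E)
    (select : (E → Bool) → ℕ → Finset E) (ω : E → Bool) (t : ℕ) (e : E) :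
    e ∈ remaining G select ω t ↔ e ∉ selectedBefore select ω t ∧
    ∀ f ∈ succBefore select ω t, Disjoint (G.ends e) (G.ends f) := by
  simp [remaining]

theorem remaining_flip [Fintype E] [DecidableEq E] {G : GraphEdges V E}
    {select : (E → Bool) → ℕ → Finset E}
    (h : G.IsOnline select) (ω : E → Bool) (t : ℕ) (e : E) (he : e ∈ remaining G select ω t) :
    e ∈ remaining G select (flipAt e ω) t := by
  rw [mem_remaining] at he ⊢
  rw [selBefore_flip h ω t e he.1]
  refine ⟨he.1, fun f hf => he.2 f ?_⟩
  unfold succBefore at hf ⊢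
  rw [selBefore_flip h ω t e he.1, Finset.mem_filter] at hf
  have hne : f ≠ e := by rintro rfl; exact he.1 hf.1
  rw [flipAt_ne ω hne] at hf
  exact Finset.mem_filter.2 hf

theorem selectedBefore_succ [DecidableEq E] (select : (E → Bool) → ℕ → Finset E)
    (ω : E → Bool) (t : ℕ) :
    selectedBefore select ω (t+1) = selectedBefore select ω t ∪ select ω t := by
  unfold selectedBefore
  rw [Finset.range_add_one, Finset.biUnion_insert, Finset.union_comm]

theorem succBefore_succ_card [DecidableEq E] (select : (E → Bool) → ℕ → Finset E)
    (ω : E → Bool) (t : ℕ) :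
    (succBefore select ω (t+1)).card =
      (succBefore select ω t).card + ((newSel select ω t).filter (fun e => ω e)).card := by
  unfold succBefore newSel
  rw [selectedBefore_succ, ← Finset.union_sdiff_self_eq_union, Finset.filter_union,
    Finset.card_union_of_disjoint]
  exact Finset.disjoint_filter_filter Finset.disjoint_sdiff

theorem sm_succ_eq [DecidableEq E] {G : GraphEdges V E} {p : E → ℝ}
    {sm : (E → Bool) → ℕ → Finset E} (hsm : G.IsSM p sm) (ω : E → Bool) (t : ℕ) :
    (sm ω t).filter (fun e => ω e) = succBefore sm ω (t+1) := by
  obtain ⟨L, _, hL⟩ := hsm.2 ω t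
  unfold succBefore
  rw [selectedBefore_succ, Finset.filter_union, eq_comm, Finset.union_eq_right]
  intro e he
  rw [Finset.mem_filter]
  refine ⟨?_, (Finset.mem_filter.1 he).2⟩
  rw [hL]
  exact Finset.mem_union_left _ he

theorem sm_newSel_bound [DecidableEq V] [Fintype E] [DecidableEq E] {G : GraphEdges V E}
    {p : E → ℝ} (hp : ∀ e, 0 ≤ p e) {sm : (E → Bool) → ℕ → Finset E} (hsm : G.IsSM p sm)
    (ω : E → Bool) (t : ℕ) (N : Finset E) (hN : G.IsMatching N)
    (hsub : N ⊆ remaining G sm ω t) :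
    ∑ e ∈ N, p e ≤ 2 * ∑ f ∈ newSel sm ω t, p f := by
  obtain ⟨L, hL, hsel⟩ := hsm.2 ω t
  have h1 := G.greedy_bound p hp _ _ L hL N hN (by
    intro e he
    have := (mem_remaining G sm ω t e).1 (hsub he)
    exact ⟨fun h => this.1 (Finset.mem_filter.1 h).1, this.2⟩)
  refine h1.trans ?_
  refine mul_le_mul_of_nonneg_left ?_ (by norm_num)
  refine Finset.sum_le_sum_of_subset_of_nonneg ?_ (fun e _ _ => hp e)
  intro e he
  unfold newSel
  rw [Finset.mem_sdiff, hsel]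
  refine ⟨Finset.mem_union_right _ he, fun hb => ?_⟩
  obtain ⟨i, hi⟩ := List.mem_iff_get.1 (List.mem_toFinset.1 he)
  have hav := (hL.1 i).1
  rw [hi] at hav
  by_cases hω : ω e
  · exact G.not_disjoint_self e (hav.2 e (Finset.mem_union_left _
      (Finset.mem_filter.2 ⟨hb, hω⟩)))
  · exact hav.1 (Finset.mem_filter.2 ⟨hb, hω⟩)

theorem alg_card_bound [DecidableEq V] [Fintype E] [DecidableEq E] {G : GraphEdges V E}
    {sm alg : (E → Bool) → ℕ → Finset E} (halg : G.IsOnline alg) (ω : E → Bool) (t s : ℕ) :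
    ((alg ω t).filter (fun e => ω e)).card ≤ 2 * (succBefore sm ω s).card +
      ∑ r ∈ Finset.range (t+1),
        ((newSel alg ω r ∩ remaining G sm ω s).filter (fun e => ω e)).card := by
  have hsub : (alg ω t).filter (fun e => ω e) ⊆
      ((succBefore sm ω s).biUnion fun f =>
        (alg ω t).filter (fun e => ¬ Disjoint (G.ends e) (G.ends f))) ∪
      ((Finset.range (t+1)).biUnion fun r =>
        (newSel alg ω r ∩ remaining G sm ω s).filter (fun e => ω e)) := by
    intro e he
    obtain ⟨he1, he2⟩ := Finset.mem_filter.1 he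
    rw [Finset.mem_union]
    by_cases hd : ∀ f ∈ succBefore sm ω s, Disjoint (G.ends e) (G.ends f)
    · right
      have hrem : e ∈ remaining G sm ω s := by
        rw [mem_remaining]
        refine ⟨fun hb => ?_, hd⟩
        exact G.not_disjoint_self e (hd e (Finset.mem_filter.2 ⟨hb, he2⟩))
      have hex : ∃ r, e ∈ alg ω r := ⟨t, he1⟩
      have hr : Nat.find hex ≤ t := Nat.find_min' hex he1
      refine Finset.mem_biUnion.2 ⟨Nat.find hex, Finset.mem_range.2 (by omega), ?_⟩
      refine Finset.mem_filter.2 ⟨Finset.mem_inter.2 ⟨?_, hrem⟩, he2⟩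
      refine Finset.mem_sdiff.2 ⟨Nat.find_spec hex, fun hb => ?_⟩
      obtain ⟨q, hq, hq2⟩ := Finset.mem_biUnion.1 hb
      exact Nat.find_min hex (Finset.mem_range.1 hq) hq2
    · left
      push Not at hd
      obtain ⟨f, hf, hfd⟩ := hd
      exact Finset.mem_biUnion.2 ⟨f, hf, Finset.mem_filter.2 ⟨he1, hfd⟩⟩
  refine (Finset.card_le_card hsub).trans ((Finset.card_union_le _ _).trans ?_)
  refine add_le_add ?_ Finset.card_biUnion_le
  refine Finset.card_biUnion_le.trans ?_
  refine (Finset.sum_le_card_nsmul _ _ 2 fun f _ => G.card_touch_le _ (halg.1 ω t) f).trans ?_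
  rw [smul_eq_mul, mul_comm]

theorem step_bound [DecidableEq V] [Fintype E] [DecidableEq E]
    (G : GraphEdges V E) (p : E → ℝ) (hp : ∀ e, 0 ≤ p e ∧ p e ≤ 1)
    (sm alg : (E → Bool) → ℕ → Finset E)
    (hsm : G.IsSM p sm) (halg : G.IsOnline alg) (t s : ℕ) :
    ∑ ω, probOf p ω * (((alg ω t).filter (fun e => ω e)).card : ℝ) ≤
      2 * (∑ ω, probOf p ω * ((succBefore sm ω s).card : ℝ)) +
      ((t + 1 : ℕ) : ℝ) * (2 * ((∑ ω, probOf p ω * ((succBefore sm ω (s+1)).card : ℝ)) -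
        ∑ ω, probOf p ω * ((succBefore sm ω s).card : ℝ))) := by
  have hgain : (∑ ω, probOf p ω * ((succBefore sm ω (s+1)).card : ℝ)) -
        ∑ ω, probOf p ω * ((succBefore sm ω s).card : ℝ) =
        ∑ ω, probOf p ω * ∑ e ∈ newSel sm ω s, p e := by
    rw [← indep_set p (fun ω => newSel sm ω s) (fun ω e he => newSel_flip hsm.1 ω s e he),
      ← Finset.sum_sub_distrib]
    refine Finset.sum_congr rfl fun ω _ => ?_
    rw [succBefore_succ_card]
    push_cast
    ring
  have hr : ∀ r, ∑ ω, probOf p ω *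
      (((newSel alg ω r ∩ remaining G sm ω s).filter (fun e => ω e)).card : ℝ) ≤
      2 * ∑ ω, probOf p ω * ∑ e ∈ newSel sm ω s, p e := by
    intro r
    rw [indep_set p (fun ω => newSel alg ω r ∩ remaining G sm ω s) (fun ω e he =>
      Finset.mem_inter.2 ⟨newSel_flip halg ω r e (Finset.mem_inter.1 he).1,
        remaining_flip hsm.1 ω s e (Finset.mem_inter.1 he).2⟩), Finset.mul_sum]
    refine Finset.sum_le_sum fun ω _ => ?_
    have hb := sm_newSel_bound (fun e => (hp e).1) hsm ω s (newSel alg ω r ∩ remaining G sm ω s)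
      (fun e he f hf => halg.1 ω r e (Finset.mem_sdiff.1 (Finset.mem_inter.1 he).1).1 f
        (Finset.mem_sdiff.1 (Finset.mem_inter.1 hf).1).1) Finset.inter_subset_right
    have := mul_le_mul_of_nonneg_left hb (probOf_nonneg p hp ω)
    linarith
  rw [hgain]
  calc ∑ ω, probOf p ω * (((alg ω t).filter (fun e => ω e)).card : ℝ)
      ≤ ∑ ω, probOf p ω * (2 * ((succBefore sm ω s).card : ℝ) + ∑ r ∈ Finset.range (t+1),
        (((newSel alg ω r ∩ remaining G sm ω s).filter (fun e => ω e)).card : ℝ)) := by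
        refine Finset.sum_le_sum fun ω _ => ?_
        refine mul_le_mul_of_nonneg_left ?_ (probOf_nonneg p hp ω)
        exact_mod_cast alg_card_bound (G := G) (sm := sm) halg ω t s
    _ = 2 * (∑ ω, probOf p ω * ((succBefore sm ω s).card : ℝ)) +
        ∑ r ∈ Finset.range (t+1), ∑ ω, probOf p ω *
        (((newSel alg ω r ∩ remaining G sm ω s).filter (fun e => ω e)).card : ℝ) := by
        rw [Finset.sum_comm, Finset.mul_sum, ← Finset.sum_add_distrib]
        refine Finset.sum_congr rfl fun ω _ => ?_
        rw [mul_add, Finset.mul_sum]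
        ring
    _ ≤ _ := by
        refine add_le_add le_rfl ?_
        refine (Finset.sum_le_card_nsmul _ _ _ fun r _ => hr r).trans ?_
        rw [Finset.card_range, nsmul_eq_mul]

theorem recursion_bound (O : ℝ) (hO : 0 ≤ O) (a : ℕ → ℝ) (h0 : a 0 = 0) (n : ℕ) (hn : 1 ≤ n)
    (h : ∀ s, O ≤ 2 * a s + (n : ℝ) * (2 * (a (s+1) - a s))) : 0.316 * O ≤ a n := by
  have hn0 : (0:ℝ) < n := by exact_mod_cast hn
  have hn1 : (1:ℝ) ≤ n := by exact_mod_cast hn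
  have hq : (0:ℝ) ≤ 1 - 1 / (n:ℝ) := by
    rw [sub_nonneg, div_le_one hn0]; exact hn1
  have hd : ∀ s, O - 2 * a s ≤ (1 - 1 / (n:ℝ)) ^ s * O := by
    intro s
    induction s with
    | zero => simp [h0]
    | succ s ih =>
      have h1 : O - 2 * a (s+1) ≤ (1 - 1 / (n:ℝ)) * (O - 2 * a s) := by
        have h2 : (O - 2 * a s) / n ≤ 2 * (a (s+1) - a s) := by
          rw [div_le_iff₀ hn0]
          linarith [h s]
        have h3 : (1 - 1 / (n:ℝ)) * (O - 2 * a s) = (O - 2 * a s) - (O - 2 * a s) / n := by ring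
        rw [h3]
        linarith
      refine h1.trans ?_
      rw [pow_succ']
      rw [mul_assoc]
      exact mul_le_mul_of_nonneg_left ih hq
  have he := Real.one_sub_div_pow_le_exp_neg hn1
  have hexp : Real.exp (-1) ≤ 0.368 := by
    rw [Real.exp_neg, inv_le_comm₀ (Real.exp_pos 1) (by norm_num)]
    have := Real.exp_one_gt_d9
    refine le_trans ?_ this.le
    norm_num
  have h5 := mul_le_mul_of_nonneg_right (he.trans hexp) hO
  have := hd n
  linarith

/-- Every stable matching process is a `0.316`-approximation
to every online algorithm, for any nonnegative round weights. -/
theorem sm_approximates_opt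
    {V E : Type} [DecidableEq V] [Fintype E] [DecidableEq E]
    (G : GraphEdges V E) (p : E → ℝ) (hp : ∀ e, 0 ≤ p e ∧ p e ≤ 1)
    (T : ℕ) (w : ℕ → ℝ) (hw : ∀ t, 0 ≤ w t)
    (sm alg : (E → Bool) → ℕ → Finset E)
    (hsm : G.IsSM p sm) (halg : G.IsOnline alg) :
    0.316 * expectedReward p w T alg ≤ expectedReward p w T sm := by
  have hre : ∀ sel : (E → Bool) → ℕ → Finset E, expectedReward p w T sel =
      ∑ t ∈ Finset.range T, w t *
        ∑ ω, probOf p ω * (((sel ω t).filter (fun e => ω e)).card : ℝ) := by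
    intro sel
    unfold expectedReward
    simp_rw [Finset.mul_sum]
    rw [Finset.sum_comm]
    exact Finset.sum_congr rfl fun t _ => Finset.sum_congr rfl fun ω _ => by ring
  rw [hre, hre, Finset.mul_sum]
  refine Finset.sum_le_sum fun t _ => ?_
  have key := recursion_bound
    (∑ ω, probOf p ω * (((alg ω t).filter (fun e => ω e)).card : ℝ))
    (Finset.sum_nonneg fun ω _ => mul_nonneg (probOf_nonneg p hp ω) (Nat.cast_nonneg _))
    (fun s => ∑ ω, probOf p ω * ((succBefore sm ω s).card : ℝ))
    (by simp [succBefore, selectedBefore]) (t+1) (by omega)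
    (fun s => step_bound G p hp sm alg hsm halg t s)
  have hs : ∑ ω, probOf p ω * (((sm ω t).filter (fun e => ω e)).card : ℝ) =
      ∑ ω, probOf p ω * ((succBefore sm ω (t+1)).card : ℝ) :=
    Finset.sum_congr rfl fun ω _ => by rw [sm_succ_eq hsm]
  rw [hs]
  have := mul_le_mul_of_nonneg_left key (hw t)
  linarith
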